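/- arXiv:1405.0392 — 4 statements merged into one kernel-verified Lean document; each statement's English description precedes it below -/
import Mathlib

section
/- Under the stated hypotheses on G, the eigenvector x satisfies x_1 > x_0. -/
open Matrix

/-- The signless Laplacian `Q(G) = D(G) + A(G)` of a finite simple graph `G`. -/
noncomputable def signlessLaplacian {V : Type*} [Fintype V] (G : SimpleGraph V) :
    Matrix V V ℝ :=
  letI := Classical.decEq V
  letI : DecidableRel G.Adj := Classical.decRel _
  Matrix.diagonal (fun v => (G.degree v : ℝ)) + G.adjMatrix ℝ

/-- The `Q`-index of `G`: the largest eigenvalue of the signless Laplacian `Q(G)`. -/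
noncomputable def qIndex {V : Type*} [Fintype V] (G : SimpleGraph V) : ℝ :=
  letI := Classical.decEq V
  sSup (spectrum ℝ (signlessLaplacian G))

/-- The action of the signless Laplacian at a vertex whose neighborhood is the finset `S`. -/
theorem signlessLaplacian_apply {V : Type*} [Fintype V] (G : SimpleGraph V) (x : V → ℝ) (v : V)
    (S : Finset V) (hS : G.neighborSet v = ↑S) :
    (signlessLaplacian G).mulVec x v = (S.card : ℝ) * x v + ∑ u ∈ S, x u := by
  classical
  have hf : ∀ inst : Fintype (G.neighborSet v), @SimpleGraph.neighborFinset V G v inst = S := by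
    intro inst
    ext u
    have := Set.ext_iff.mp hS u
    simpa using this
  unfold signlessLaplacian
  simp only [Matrix.add_mulVec, Pi.add_apply, Matrix.mulVec_diagonal,
    SimpleGraph.adjMatrix_mulVec_apply, ← SimpleGraph.card_neighborFinset_eq_degree, hf]

/-- for the maximal outer-planar graph of type `D_1` with `Δ = n - 3`,
the Perron eigenvector satisfies `x_1 > x_0`. -/
theorem stmt_5 (n k : ℕ) (hn : 7 ≤ n) (hk1 : 4 ≤ k) (hk2 : k ≤ n - 3)
    (G : SimpleGraph (Fin n))
    (h0 : G.neighborSet ⟨0, by omega⟩ = {⟨1, by omega⟩, ⟨n - 1, by omega⟩})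
    (h1 : G.neighborSet ⟨1, by omega⟩ =
      {⟨0, by omega⟩, ⟨2, by omega⟩, ⟨n - 1, by omega⟩})
    (h2 : G.neighborSet ⟨2, by omega⟩ =
      {⟨1, by omega⟩, ⟨3, by omega⟩, ⟨k, by omega⟩, ⟨n - 1, by omega⟩})
    (hlast : G.neighborSet ⟨n - 1, by omega⟩ =
      {⟨0, by omega⟩, ⟨1, by omega⟩, ⟨2, by omega⟩, ⟨k, by omega⟩, ⟨n - 2, by omega⟩})
    (hk' : G.neighborSet ⟨k, by omega⟩ =
      {u : Fin n | 2 ≤ u.val ∧ u ≠ ⟨k, by omega⟩})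
    (x : Fin n → ℝ) (hpos : ∀ i, 0 < x i)
    (heig : (signlessLaplacian G).mulVec x = qIndex G • x) :
    x ⟨0, by omega⟩ < x ⟨1, by omega⟩ := by
  have e0 := signlessLaplacian_apply G x ⟨0, by omega⟩ {⟨1, by omega⟩, ⟨n - 1, by omega⟩}
    (by rw [h0]; simp)
  have e1 := signlessLaplacian_apply G x ⟨1, by omega⟩
    {⟨0, by omega⟩, ⟨2, by omega⟩, ⟨n - 1, by omega⟩} (by rw [h1]; simp)
  have a1 : (1 : ℕ) ≠ n - 1 := by omega
  have a2 : (2 : ℕ) ≠ n - 1 := by omega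
  have a0 : (0 : ℕ) ≠ n - 1 := by omega
  rw [heig, Finset.card_insert_of_notMem (by simp [a1]), Finset.sum_insert (by simp [a1]),
    Finset.card_singleton, Finset.sum_singleton] at e0
  rw [heig, Finset.card_insert_of_notMem (by simp [a0]), Finset.sum_insert (by simp [a0]),
    Finset.card_insert_of_notMem (by simp [a2]), Finset.sum_insert (by simp [a2]),
    Finset.card_singleton, Finset.sum_singleton] at e1
  simp only [Pi.smul_apply, smul_eq_mul] at e0 e1
  push_cast at e0 e1
  have p0 := hpos ⟨0, by omega⟩
  have p1 := hpos ⟨1, by omega⟩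
  have p2 := hpos ⟨2, by omega⟩
  have pl := hpos ⟨n - 1, by omega⟩
  generalize x ⟨0, _⟩ = y0 at *
  generalize x ⟨1, _⟩ = y1 at *
  generalize x ⟨2, _⟩ = y2 at *
  generalize x ⟨n - 1, _⟩ = yl at *
  generalize qIndex G = q at *
  have hq : 2 < q := by
    by_contra hc
    nlinarith
  by_contra hc
  nlinarith
end

section
/- Under the stated hypotheses on G, if n ≥ 8 then the eigenvector x satisfies x_k > x_2. -/
open Matrix

lemma row_eq {V : Type*} [Fintype V] (G : SimpleGraph V) (x : V → ℝ) (q : ℝ)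
    (heig : (signlessLaplacian G).mulVec x = q • x) (v : V) (T : Finset V)
    (hT : G.neighborSet v = (T : Set V)) :
    ∑ u ∈ T, (x v + x u) = q * x v := by
  classical
  have h := congrFun heig v
  simp only [signlessLaplacian, Matrix.add_mulVec, Pi.add_apply, Matrix.mulVec_diagonal,
    Pi.smul_apply, smul_eq_mul] at h
  rw [SimpleGraph.adjMatrix_mulVec_apply] at h
  rw [← h, Finset.sum_add_distrib, Finset.sum_const, nsmul_eq_mul]
  have e : ∀ inst : Fintype (G.neighborSet v),
      @SimpleGraph.neighborFinset V G v inst = T := by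
    intro inst
    ext u
    rw [SimpleGraph.mem_neighborFinset, ← SimpleGraph.mem_neighborSet, hT, Finset.mem_coe]
  rw [← SimpleGraph.card_neighborFinset_eq_degree, e]

lemma row_le {V : Type*} [Fintype V] (G : SimpleGraph V) (x : V → ℝ) (q : ℝ)
    (hpos : ∀ i, 0 < x i)
    (heig : (signlessLaplacian G).mulVec x = q • x) (v : V) (T : Finset V)
    (hT : ∀ u ∈ T, G.Adj v u) :
    ∑ u ∈ T, (x v + x u) ≤ q * x v := by
  classical
  rw [← row_eq G x q heig v (G.neighborFinset v) (by simp)]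
  apply Finset.sum_le_sum_of_subset_of_nonneg
  · intro u hu
    simpa using hT u hu
  · intro u _ _
    have := hpos u
    have := hpos v
    linarith

lemma core (q x0 x1 x2 x3 xk xl xm y : ℝ) (p0 : 0 < x0) (p1 : 0 < x1) (p2 : 0 < x2)
    (p3 : 0 < x3) (pk : 0 < xk) (pl : 0 < xl) (pm : 0 < xm) (py : 0 < y)
    (e0 : q * x0 = 2 * x0 + x1 + xl)
    (e1 : q * x1 = 3 * x1 + x0 + x2 + xl)
    (e2 : q * x2 = 4 * x2 + x1 + x3 + xk + xl)
    (el : q * xl = 5 * xl + x0 + x1 + x2 + xk + xm)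
    (ek : 5 * xk + x2 + x3 + xl + xm + y ≤ q * xk)
    (e3 : 2 * x3 + x2 + xk ≤ q * x3) : x2 < xk := by
  by_contra hc
  push Not at hc
  have hq : 7 ≤ q := by
    by_contra h
    push Not at h
    have hw : 0 < x2 + xk + 6 / 5 * xl + 1 / 2 * x1 + 2 / 5 * x3 := by positivity
    have := mul_pos (sub_pos.2 h) hw
    nlinarith
  -- S = q xk - 5 xk - x2 - x3 - xl
  have hS : xk + (q * xk - 5 * xk - x2 - x3 - xl) ≤ x1 := by
    have := mul_nonneg (by linarith : 0 ≤ q - 3) (sub_nonneg.2 hc)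
    nlinarith
  have h1 : xk + xm ≤ x1 := by linarith
  have h21 : x2 ≤ x1 := by
    have a : (q - 4) * xk ≤ (q - 4) * x1 :=
      mul_le_mul_of_nonneg_left (by linarith) (by linarith)
    have b : (q - 3) * x2 ≤ (q - 3) * x1 := by nlinarith
    exact le_of_mul_le_mul_left b (by linarith)
  have c0 := mul_nonneg (sub_nonneg.2 hq) p0.le
  have c1 := mul_nonneg (sub_nonneg.2 hq) p1.le
  have cl := mul_nonneg (sub_nonneg.2 hq) pl.le
  linarith

/-- for the maximal outer-planar graph of type `D_1` with `Δ = n - 3`,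
if `n ≥ 8` then the Perron eigenvector satisfies `x_k > x_2`. -/
theorem stmt_8 (n k : ℕ) (hn : 7 ≤ n) (hk1 : 4 ≤ k) (hk2 : k ≤ n - 3)
    (G : SimpleGraph (Fin n))
    (h0 : G.neighborSet ⟨0, by omega⟩ = {⟨1, by omega⟩, ⟨n - 1, by omega⟩})
    (h1 : G.neighborSet ⟨1, by omega⟩ =
      {⟨0, by omega⟩, ⟨2, by omega⟩, ⟨n - 1, by omega⟩})
    (h2 : G.neighborSet ⟨2, by omega⟩ =
      {⟨1, by omega⟩, ⟨3, by omega⟩, ⟨k, by omega⟩, ⟨n - 1, by omega⟩})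
    (hlast : G.neighborSet ⟨n - 1, by omega⟩ =
      {⟨0, by omega⟩, ⟨1, by omega⟩, ⟨2, by omega⟩, ⟨k, by omega⟩, ⟨n - 2, by omega⟩})
    (hk' : G.neighborSet ⟨k, by omega⟩ =
      {u : Fin n | 2 ≤ u.val ∧ u ≠ ⟨k, by omega⟩})
    (x : Fin n → ℝ) (hpos : ∀ i, 0 < x i)
    (heig : (signlessLaplacian G).mulVec x = qIndex G • x)
    (hn8 : 8 ≤ n) :
    x ⟨2, by omega⟩ < x ⟨k, by omega⟩ := by
  have b0 : 0 < n := by omega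
  have b1 : 1 < n := by omega
  have b2 : 2 < n := by omega
  have b3 : 3 < n := by omega
  have bk : k < n := by omega
  have bl : n - 1 < n := by omega
  have bm : n - 2 < n := by omega
  set q := qIndex G
  have r0 := row_eq G x q heig _ {⟨1, b1⟩, ⟨n - 1, bl⟩} (by simpa using h0)
  have r1 := row_eq G x q heig _ {⟨0, b0⟩, ⟨2, b2⟩, ⟨n - 1, bl⟩}
    (by simpa using h1)
  have r2 := row_eq G x q heig _
    {⟨1, b1⟩, ⟨3, b3⟩, ⟨k, bk⟩, ⟨n - 1, bl⟩} (by simpa using h2)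
  have rl := row_eq G x q heig _
    {⟨0, b0⟩, ⟨1, b1⟩, ⟨2, b2⟩, ⟨k, bk⟩, ⟨n - 2, bm⟩}
    (by simpa using hlast)
  have hA : ∀ u : Fin n, 2 ≤ u.val → u.val ≠ k → G.Adj ⟨k, bk⟩ u := by
    intro u hu huk
    rw [← SimpleGraph.mem_neighborSet, hk']
    exact ⟨hu, fun h => huk (by rw [h])⟩
  have hB : G.Adj ⟨2, b2⟩ ⟨3, b3⟩ := by
    rw [← SimpleGraph.mem_neighborSet, h2]
    simp
  have r3 := row_le G x q hpos heig ⟨3, b3⟩ {⟨2, b2⟩, ⟨k, bk⟩} (by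
    intro u hu
    simp only [Finset.mem_insert, Finset.mem_singleton] at hu
    rcases hu with rfl | rfl
    · exact hB.symm
    · exact (hA _ (by simp) (by simp; omega)).symm)
  obtain ⟨w, hw4, hwk, hwn⟩ : ∃ w : ℕ, 4 ≤ w ∧ w ≠ k ∧ w < n - 2 := by
    by_cases h : k = 4
    · exact ⟨5, by omega, by omega, by omega⟩
    · exact ⟨4, by omega, by omega, by omega⟩
  have rk := row_le G x q hpos heig ⟨k, bk⟩ {⟨2, b2⟩, ⟨3, b3⟩,
      ⟨n - 1, bl⟩, ⟨n - 2, bm⟩, ⟨w, by omega⟩} (by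
    intro u hu
    simp only [Finset.mem_insert, Finset.mem_singleton] at hu
    rcases hu with rfl | rfl | rfl | rfl | rfl <;> apply hA <;> simp only [] <;> omega)
  repeat rw [Finset.sum_insert (by
    simp only [Finset.mem_insert, Finset.mem_singleton, Fin.mk.injEq]; omega)] at r0
  repeat rw [Finset.sum_insert (by
    simp only [Finset.mem_insert, Finset.mem_singleton, Fin.mk.injEq]; omega)] at r1
  repeat rw [Finset.sum_insert (by
    simp only [Finset.mem_insert, Finset.mem_singleton, Fin.mk.injEq]; omega)] at r2
  repeat rw [Finset.sum_insert (by
    simp only [Finset.mem_insert, Finset.mem_singleton, Fin.mk.injEq]; omega)] at rl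
  repeat rw [Finset.sum_insert (by
    simp only [Finset.mem_insert, Finset.mem_singleton, Fin.mk.injEq]; omega)] at r3
  repeat rw [Finset.sum_insert (by
    simp only [Finset.mem_insert, Finset.mem_singleton, Fin.mk.injEq]; omega)] at rk
  rw [Finset.sum_singleton] at r0 r1 r2 rl r3 rk
  exact core q _ _ _ _ _ _ _ _ (hpos ⟨0, b0⟩) (hpos ⟨1, b1⟩) (hpos _)
    (hpos ⟨3, b3⟩) (hpos _) (hpos ⟨n - 1, bl⟩) (hpos ⟨n - 2, bm⟩)
    (hpos ⟨w, by omega⟩) (by linarith) (by linarith) (by linarith) (by linarith)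
    (by linarith) (by linarith)
end

section
/- Under the stated hypotheses on G, if n ≥ 12 then the graph F obtained from G by deleting the edge v_2v_{n−1} and adding the edge v_1v_k satisfies q(F) > q(G). -/
open Matrix

open Classical in
lemma sl_mulVec {V : Type*} [Fintype V] (G : SimpleGraph V) (x : V → ℝ) (i : V) :
    (signlessLaplacian G *ᵥ x) i = ∑ j, if G.Adj i j then x i + x j else 0 := by
  unfold signlessLaplacian
  rw [Matrix.add_mulVec, Pi.add_apply, Matrix.mulVec_diagonal, SimpleGraph.adjMatrix_mulVec_apply,
    ← Finset.sum_filter, Finset.sum_add_distrib, Finset.sum_const, nsmul_eq_mul,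
    ← SimpleGraph.card_neighborFinset_eq_degree, SimpleGraph.neighborFinset_eq_filter]

lemma sl_herm {V : Type*} [Fintype V] (G : SimpleGraph V) : (signlessLaplacian G).IsHermitian := by
  classical
  unfold signlessLaplacian
  refine Matrix.IsHermitian.add (Matrix.isHermitian_diagonal _) ?_
  rw [Matrix.IsHermitian, Matrix.conjTranspose_eq_transpose_of_trivial]
  exact SimpleGraph.transpose_adjMatrix _

lemma sl_psd {V : Type*} [Fintype V] [DecidableEq V] (G : SimpleGraph V) :
    (qIndex G • (1 : Matrix V V ℝ) - signlessLaplacian G).PosSemidef := by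
  have hq : qIndex G = sSup (spectrum ℝ (signlessLaplacian G)) := by
    unfold qIndex; congr!
  have hH := sl_herm G
  rw [Matrix.posSemidef_iff_isHermitian_and_spectrum_nonneg]
  refine ⟨?_, ?_⟩
  · refine Matrix.IsHermitian.sub ?_ hH
    rw [Matrix.IsHermitian]; simp
  · rw [← Algebra.algebraMap_eq_smul_one, ← spectrum.singleton_sub_eq]
    rintro y hy
    obtain ⟨a, rfl, s, hs, rfl⟩ := Set.mem_sub.1 hy
    have : s ≤ qIndex G := by
      rw [hq]
      refine le_csSup ?_ hs
      rw [hH.spectrum_real_eq_range_eigenvalues]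
      exact (Set.finite_range _).bddAbove
    simpa using this

lemma sl_le {V : Type*} [Fintype V] (G : SimpleGraph V) (x : V → ℝ) :
    x ⬝ᵥ (signlessLaplacian G *ᵥ x) ≤ qIndex G * (x ⬝ᵥ x) := by
  classical
  have := (sl_psd G).dotProduct_mulVec_nonneg x
  simp [Matrix.sub_mulVec, Matrix.smul_mulVec, dotProduct_sub] at this
  exact this

lemma sl_eig {V : Type*} [Fintype V] [Nonempty V] (G : SimpleGraph V) :
    ∃ x : V → ℝ, x ≠ 0 ∧ (∀ i, 0 ≤ x i) ∧ signlessLaplacian G *ᵥ x = qIndex G • x := by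
  classical
  have hq : qIndex G = sSup (spectrum ℝ (signlessLaplacian G)) := by
    unfold qIndex; congr!
  have hH := sl_herm G
  have hmem : qIndex G ∈ spectrum ℝ (signlessLaplacian G) := by
    rw [hq]
    apply Set.Nonempty.csSup_mem
    · rw [hH.spectrum_real_eq_range_eigenvalues]; exact Set.range_nonempty _
    · rw [hH.spectrum_real_eq_range_eigenvalues]; exact Set.finite_range _
  rw [hH.spectrum_real_eq_range_eigenvalues] at hmem
  obtain ⟨i, hi⟩ := hmem
  have hy := hH.mulVec_eigenvectorBasis i
  have hy0 : ((hH.eigenvectorBasis i).ofLp : V → ℝ) ≠ 0 := by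
    intro h
    apply hH.eigenvectorBasis.toBasis.ne_zero i
    simpa using h
  generalize ((hH.eigenvectorBasis i).ofLp : V → ℝ) = y at hy hy0
  rw [hi] at hy
  refine ⟨fun i => |y i|, ?_, fun i => abs_nonneg _, ?_⟩
  · intro h
    apply hy0
    ext j
    simpa using congrFun h j
  · set x : V → ℝ := fun i => |y i| with hx
    have h1 : x ⬝ᵥ x = y ⬝ᵥ y := by simp [dotProduct, hx]
    have h2 : y ⬝ᵥ (signlessLaplacian G *ᵥ y) ≤ x ⬝ᵥ (signlessLaplacian G *ᵥ x) := by
      unfold dotProduct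
      refine Finset.sum_le_sum fun i _ => ?_
      rw [sl_mulVec, sl_mulVec, Finset.mul_sum, Finset.mul_sum]
      refine Finset.sum_le_sum fun j _ => ?_
      split_ifs
      · simp only [hx, mul_add, abs_mul_abs_self, ← abs_mul]
        linarith [le_abs_self (y i * y j)]
      · simp
    rw [hy] at h2
    have h3 := sl_le G x
    have h4 : x ⬝ᵥ (signlessLaplacian G *ᵥ x) = qIndex G * (x ⬝ᵥ x) := by
      apply le_antisymm h3
      rw [h1]
      simpa using h2
    have h5 := ((sl_psd G).dotProduct_mulVec_zero_iff x).1 (by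
      simp [Matrix.sub_mulVec, Matrix.smul_mulVec, dotProduct_sub, h4])
    simp [Matrix.sub_mulVec, Matrix.smul_mulVec] at h5
    exact (sub_eq_zero.1 h5).symm

open Classical in
lemma sl_diff {V : Type*} [Fintype V] (G F : SimpleGraph V) (a b c d : V)
    (hab : a ≠ b) (hcd : c ≠ d)
    (hG : G.Adj a b) (hG' : ¬ G.Adj c d) 
    (hF : ∀ i j, F.Adj i j ↔ (G.Adj i j ∧ s(i,j) ≠ s(a,b)) ∨ s(i,j) = s(c,d))
    (x : V → ℝ) :
    x ⬝ᵥ (signlessLaplacian F *ᵥ x) + (x a + x b)^2 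
      = x ⬝ᵥ (signlessLaplacian G *ᵥ x) + (x c + x d)^2 := by
  have key : ∀ a b : V, (x a + x b)^2 = ∑ i, ∑ j, ((if i = a then if j = b then x i * (x i + x j) else 0 else 0) + (if i = b then if j = a then x i * (x i + x j) else 0 else 0)) := by
    intro a b
    simp only [Finset.sum_add_distrib]
    rw [Finset.sum_comm]
    simp
    ring
  have e : ∀ H : SimpleGraph V, x ⬝ᵥ (signlessLaplacian H *ᵥ x) = ∑ i, ∑ j, if H.Adj i j then x i * (x i + x j) else 0 := by
    intro H
    unfold dotProduct
    simp only [sl_mulVec, Finset.mul_sum, mul_ite, mul_zero]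
  rw [e, e, key, key, ← Finset.sum_add_distrib, ← Finset.sum_add_distrib]
  refine Finset.sum_congr rfl fun i _ => ?_
  rw [← Finset.sum_add_distrib, ← Finset.sum_add_distrib]
  refine Finset.sum_congr rfl fun j _ => ?_
  have h1 := hF i j
  have hs := hG.symm
  have hs' : ¬ G.Adj d c := fun h => hG' h.symm
  simp only [Sym2.eq_iff, ne_eq] at h1
  by_cases p1 : i = a ∧ j = b
  · obtain ⟨rfl, rfl⟩ := p1
    grind
  by_cases p2 : i = b ∧ j = a
  · obtain ⟨rfl, rfl⟩ := p2
    grind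
  by_cases p3 : i = c ∧ j = d
  · obtain ⟨rfl, rfl⟩ := p3
    grind
  by_cases p4 : i = d ∧ j = c
  · obtain ⟨rfl, rfl⟩ := p4
    grind
  grind

/-- for the maximal outer-planar graph of type `D_1` with `Δ = n - 3`,
if `n ≥ 12` then deleting the edge `v_2 v_{n-1}` and adding the edge `v_1 v_k`
increases the `Q`-index. -/
theorem stmt_11 (n k : ℕ) (hn : 7 ≤ n) (hk1 : 4 ≤ k) (hk2 : k ≤ n - 3)
    (G : SimpleGraph (Fin n))
    (h0 : G.neighborSet ⟨0, by omega⟩ = {⟨1, by omega⟩, ⟨n - 1, by omega⟩})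
    (h1 : G.neighborSet ⟨1, by omega⟩ =
      {⟨0, by omega⟩, ⟨2, by omega⟩, ⟨n - 1, by omega⟩})
    (h2 : G.neighborSet ⟨2, by omega⟩ =
      {⟨1, by omega⟩, ⟨3, by omega⟩, ⟨k, by omega⟩, ⟨n - 1, by omega⟩})
    (hlast : G.neighborSet ⟨n - 1, by omega⟩ =
      {⟨0, by omega⟩, ⟨1, by omega⟩, ⟨2, by omega⟩, ⟨k, by omega⟩, ⟨n - 2, by omega⟩})
    (hk' : G.neighborSet ⟨k, by omega⟩ =
      {u : Fin n | 2 ≤ u.val ∧ u ≠ ⟨k, by omega⟩})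
    (hn12 : 12 ≤ n) :
    qIndex G <
      qIndex (SimpleGraph.fromEdgeSet
        ((G.edgeSet \ {s((⟨2, by omega⟩ : Fin n), (⟨n - 1, by omega⟩ : Fin n))}) ∪
          {s((⟨1, by omega⟩ : Fin n), (⟨k, by omega⟩ : Fin n))})) := by
  classical
  haveI : Nonempty (Fin n) := ⟨⟨0, by omega⟩⟩
  obtain ⟨x, hx0, hx, he⟩ := sl_eig G
  set q := qIndex G with hq
  have hE : ∀ i, ∑ j ∈ G.neighborFinset i, (x i + x j) = q * x i := by
    intro i
    have := congrFun he i
    rw [sl_mulVec, ← Finset.sum_filter, ← SimpleGraph.neighborFinset_eq_filter] at this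
    simpa using this
  generalize hv0 : (⟨0, by omega⟩ : Fin n) = v0 at *
  generalize hv1 : (⟨1, by omega⟩ : Fin n) = v1 at *
  generalize hv2 : (⟨2, by omega⟩ : Fin n) = v2 at *
  generalize hv3 : (⟨3, by omega⟩ : Fin n) = v3 at *
  generalize hvk : (⟨k, by omega⟩ : Fin n) = vk at *
  generalize hvm : (⟨n-2, by omega⟩ : Fin n) = vm at *
  generalize hvl : (⟨n-1, by omega⟩ : Fin n) = vl at *
  have w0 : v0.val = 0 := by rw [← hv0]
  have w1 : v1.val = 1 := by rw [← hv1]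
  have w2 : v2.val = 2 := by rw [← hv2]
  have w3 : v3.val = 3 := by rw [← hv3]
  have wk : vk.val = k := by rw [← hvk]
  have wm : vm.val = n - 2 := by rw [← hvm]
  have wl : vl.val = n - 1 := by rw [← hvl]
  clear hv0 hv1 hv2 hv3 hvk hvm hvl
  have n0 : G.neighborFinset v0 = {v1, vl} := by
    ext j; simpa using Set.ext_iff.1 h0 j
  have n1 : G.neighborFinset v1 = {v0, v2, vl} := by
    ext j; simpa using Set.ext_iff.1 h1 j
  have n2 : G.neighborFinset v2 = {v1, v3, vk, vl} := by
    ext j; simpa using Set.ext_iff.1 h2 j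
  have nl : G.neighborFinset vl = {v0, v1, v2, vk, vm} := by
    ext j; simpa using Set.ext_iff.1 hlast j
  have nk : G.neighborFinset vk = {v0, v1, vk}ᶜ := by
    ext j
    have := Set.ext_iff.1 hk' j
    simp only [SimpleGraph.mem_neighborSet, Set.mem_setOf_eq] at this
    simp only [SimpleGraph.mem_neighborFinset, this, Finset.mem_compl, Finset.mem_insert,
      Finset.mem_singleton, Fin.ext_iff, ne_eq]
    omega
  have e0 := hE v0
  have e1 := hE v1
  have e2 := hE v2
  have el := hE vl
  have ek := hE vk
  have ne : ∀ {a b : Fin n}, a.val ≠ b.val → a ≠ b := fun h h' => h (congrArg _ h')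
  rw [n0, Finset.sum_pair (ne (by omega))] at e0
  rw [n1, Finset.sum_insert (by simp [Fin.ext_iff]; omega), Finset.sum_pair (ne (by omega))] at e1
  rw [n2, Finset.sum_insert (by simp [Fin.ext_iff]; omega),
    Finset.sum_insert (by simp [Fin.ext_iff]; omega), Finset.sum_pair (ne (by omega))] at e2
  rw [nl, Finset.sum_insert (by simp [Fin.ext_iff]; omega),
    Finset.sum_insert (by simp [Fin.ext_iff]; omega),
    Finset.sum_insert (by simp [Fin.ext_iff]; omega), Finset.sum_pair (ne (by omega))] at el
  have ck : (G.neighborFinset vk).card = n - 3 := by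
    rw [nk, Finset.card_compl, Finset.card_insert_of_notMem (by simp [Fin.ext_iff]; omega),
      Finset.card_pair (ne (by omega))]
    simp
  have ck' : ((G.neighborFinset vk).card : ℝ) = n - 3 := by
    rw [ck, Nat.cast_sub (by omega)]; simp
  rw [Finset.sum_add_distrib, Finset.sum_const, nsmul_eq_mul, ck'] at ek
  have hnR : (12 : ℝ) ≤ n := by exact_mod_cast hn12
  have hkpos : 0 < x vk := by
    rcases (hx vk).eq_or_lt with h | h
    swap
    · exact h
    exfalso
    rw [← h] at ek
    simp only [mul_zero, zero_add] at ek
    rw [Finset.sum_eq_zero_iff_of_nonneg (fun i _ => hx i)] at ek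
    have hl : x vl = 0 := ek vl (by rw [nk]; simp [Fin.ext_iff]; omega)
    rw [hl] at el
    have a0 := hx v0
    have a1 := hx v1
    have a2 := hx v2
    have a3 := hx vm
    have z0 : x v0 = 0 := by linarith
    have z1 : x v1 = 0 := by linarith
    apply hx0
    ext j
    by_cases hj : j ∈ G.neighborFinset vk
    · simpa using ek j hj
    · rw [nk] at hj
      simp only [Finset.mem_compl, not_not, Finset.mem_insert, Finset.mem_singleton] at hj
      rcases hj with rfl | rfl | rfl
      · exact z0
      · exact z1
      · exact h.symm
  have hqd : (n:ℝ) - 3 ≤ q := by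
    have := Finset.sum_nonneg (s := G.neighborFinset vk) (f := x) (fun i _ => hx i)
    refine le_of_mul_le_mul_right (a := x vk) ?_ hkpos
    linarith
  have hnb : ∀ j ∈ G.neighborFinset vk, x vk ≤ (q - 1) * x j := by
    intro j hj
    have h := hE j
    have hm : vk ∈ G.neighborFinset j := by
      rw [SimpleGraph.mem_neighborFinset] at hj ⊢; exact hj.symm
    have := Finset.single_le_sum (f := fun i => x j + x i) (fun i _ => add_nonneg (hx j) (hx i)) hm
    linarith
  have hq1 : (n:ℝ) - 2 ≤ q := by
    have h := Finset.sum_le_sum hnb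
    rw [Finset.sum_const, nsmul_eq_mul, ck', ← Finset.mul_sum] at h
    have h2 : ((n:ℝ) - 3) ≤ (q-1) * (q - (n-3)) := by
      refine le_of_mul_le_mul_right (a := x vk) ?_ hkpos
      have : ∑ i ∈ G.neighborFinset vk, x i = (q - (n-3)) * x vk := by linarith
      rw [this] at h
      linarith
    by_contra hc
    push Not at hc
    nlinarith
  have hmid : ∀ j : Fin n, j ≠ vl → j ≠ v2 → j ∈ G.neighborFinset vk → x j ≤ x vk := by
    intro j hjl hj2 hj
    have hjk : j ≠ vk := by
      rintro rfl; simp at hj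
    have hsub : (G.neighborFinset j).erase vk ⊆ (G.neighborFinset vk).erase j := by
      intro i hi
      rw [Finset.mem_erase, SimpleGraph.mem_neighborFinset] at hi
      have hij : i ∈ G.neighborFinset j := by simpa using hi.2
      have hji : j ∈ G.neighborFinset i := by simpa using hi.2.symm
      rw [Finset.mem_erase]
      refine ⟨hi.2.ne.symm, ?_⟩
      rw [nk] at hj ⊢
      simp only [Finset.mem_compl, Finset.mem_insert, Finset.mem_singleton, not_or] at hj ⊢
      refine ⟨?_, ?_, hi.1⟩
      · rintro rfl
        rw [n0] at hji; simp at hji; tauto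
      · rintro rfl
        rw [n1] at hji; simp at hji; tauto
    have hkj : vk ∈ G.neighborFinset j := by
      rw [SimpleGraph.mem_neighborFinset] at hj ⊢; exact hj.symm
    have ej := hE j
    have hek := hE vk
    rw [← Finset.add_sum_erase _ _ hkj, Finset.sum_add_distrib, Finset.sum_const, nsmul_eq_mul] at ej
    rw [← Finset.add_sum_erase _ _ hj, Finset.sum_add_distrib, Finset.sum_const, nsmul_eq_mul] at hek
    have hs := Finset.sum_le_sum_of_subset_of_nonneg hsub (f := x) (fun i _ _ => hx i)
    have hc : (((G.neighborFinset j).erase vk).card : ℝ) ≤ (((G.neighborFinset vk).erase j).card : ℝ) := by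
      exact_mod_cast Finset.card_le_card hsub
    have hc2 : (((G.neighborFinset vk).erase j).card : ℝ) = n - 4 := by
      rw [Finset.card_erase_of_mem hj, ck, Nat.cast_sub (by omega), Nat.cast_sub (by omega)]
      push_cast; ring
    rw [hc2] at hc hek
    by_contra hlt
    push Not at hlt
    have := mul_le_mul_of_nonneg_right hc (hx j)
    nlinarith
  have x3 := hmid v3 (ne (by omega)) (ne (by omega)) (by rw [nk]; simp [Fin.ext_iff]; omega)
  have xm := hmid vm (ne (by omega)) (ne (by omega)) (by rw [nk]; simp [Fin.ext_iff]; omega)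
  have hq10 : 10 ≤ q := by linarith
  have m0 := mul_le_mul_of_nonneg_right hq10 (hx v0)
  have m1 := mul_le_mul_of_nonneg_right hq10 (hx v1)
  have m2 := mul_le_mul_of_nonneg_right hq10 (hx v2)
  have ml := mul_le_mul_of_nonneg_right hq10 (hx vl)
  have a0 := hx v0
  have a1 := hx v1
  have a2 := hx v2
  have al := hx vl
  have hmain : x v2 + x vl < x v1 + x vk := by
    linarith
  have hxx : 0 < x ⬝ᵥ x := by
    have h : 0 ≤ x ⬝ᵥ x := Finset.sum_nonneg fun i _ => mul_self_nonneg _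
    refine lt_of_le_of_ne h fun h => hx0 (dotProduct_self_eq_zero.1 h.symm)
  have hdiff := sl_diff G (SimpleGraph.fromEdgeSet
        ((G.edgeSet \ {s(v2, vl)}) ∪ {s(v1, vk)})) v2 vl v1 vk (ne (by omega)) (ne (by omega))
    (by rw [← SimpleGraph.mem_neighborFinset, n2]; simp)
    (by rw [← SimpleGraph.mem_neighborFinset, n1]; simp [Fin.ext_iff]; omega)
    (by
      intro i j
      rw [SimpleGraph.fromEdgeSet_adj]
      simp only [Set.mem_union, Set.mem_diff, SimpleGraph.mem_edgeSet, Set.mem_singleton_iff]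
      constructor
      · exact fun h => h.1
      · intro h
        refine ⟨h, ?_⟩
        rcases h with h | h
        · exact h.1.ne
        · rintro rfl
          rw [Sym2.eq_iff] at h
          simp only [Fin.ext_iff] at h
          omega) x
  have hle := sl_le (SimpleGraph.fromEdgeSet
        ((G.edgeSet \ {s(v2, vl)}) ∪ {s(v1, vk)})) x
  rw [he, dotProduct_smul, smul_eq_mul] at hdiff
  refine lt_of_mul_lt_mul_right (a := x ⬝ᵥ x) ?_ hxx.le
  have : (x v2 + x vl)^2 < (x v1 + x vk)^2 := by
    apply pow_lt_pow_left₀ hmain (by linarith) (by norm_num)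
  linarith
end

section
/- Let G be a finite simple graph on a nonempty vertex set in which every vertex has degree at least 1. Then the Q-index of G satisfies q(G) ≤ max over vertices u of ( d(u) + (1/d(u)) · Σ_{v∼u} d(v) ). -/
open Matrix

theorem signlessLaplacian_mulVec {V : Type*} [Fintype V] [DecidableEq V]
    (G : SimpleGraph V) [DecidableRel G.Adj] (x : V → ℝ) (u : V) :
    (signlessLaplacian G *ᵥ x) u =
      (G.degree u : ℝ) * x u + ∑ v ∈ G.neighborFinset u, x v := by
  rename_i i1 i2
  obtain rfl : i1 = Classical.decEq V := Subsingleton.elim _ _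
  letI := Classical.decEq V
  obtain rfl : i2 = Classical.decRel _ := Subsingleton.elim _ _
  unfold signlessLaplacian
  rw [Matrix.add_mulVec, Pi.add_apply, Matrix.mulVec_diagonal,
    SimpleGraph.adjMatrix_mulVec_apply]

theorem exists_eigenvector_of_mem_spectrum {V : Type*} [Fintype V] [DecidableEq V]
    (M : Matrix V V ℝ) (l : ℝ) (hl : l ∈ spectrum ℝ M) :
    ∃ x : V → ℝ, x ≠ 0 ∧ M *ᵥ x = l • x := by
  rw [← Matrix.spectrum_toLin', ← Module.End.hasEigenvalue_iff_mem_spectrum] at hl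
  obtain ⟨x, hx⟩ := hl.exists_hasEigenvector
  have hev := hx.apply_eq_smul
  rw [Matrix.toLin'_apply] at hev
  exact ⟨x, hx.2, hev⟩

/-- `q(G) ≤ max_u ( d(u) + (1/d(u)) ∑_{v∼u} d(v) )` for graphs with
minimum degree at least `1`. -/
theorem stmt_18 {V : Type*} [Fintype V] [DecidableEq V] [Nonempty V]
    (G : SimpleGraph V) [DecidableRel G.Adj] (hdeg : ∀ v, 1 ≤ G.degree v) :
    qIndex G ≤ Finset.univ.sup' Finset.univ_nonempty
      (fun u => (G.degree u : ℝ) +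
        (1 / (G.degree u : ℝ)) * ∑ v ∈ G.neighborFinset u, (G.degree v : ℝ)) := by
  have hd : ∀ v, (0 : ℝ) < G.degree v := fun v => by exact_mod_cast hdeg v
  unfold qIndex
  apply Real.sSup_le
  · intro l hl
    obtain ⟨x, hne, hev⟩ :=
      @exists_eigenvector_of_mem_spectrum V _ (Classical.decEq V) _ l hl
    obtain ⟨u, -, hu⟩ := Finset.exists_max_image Finset.univ
      (fun v => |x v| / (G.degree v : ℝ)) Finset.univ_nonempty
    obtain ⟨w, hw⟩ := Function.ne_iff.mp hne
    have hxu : 0 < |x u| := by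
      have h1 : 0 < |x w| / (G.degree w : ℝ) := div_pos (abs_pos.mpr hw) (hd w)
      have h2 := h1.trans_le (hu w (Finset.mem_univ w))
      exact (div_pos_iff_of_pos_right (hd u)).mp h2
    have hrow := congrFun hev u
    rw [signlessLaplacian_mulVec, Pi.smul_apply, smul_eq_mul] at hrow
    refine le_trans ?_ (Finset.le_sup' _ (Finset.mem_univ u))
    refine le_of_mul_le_mul_right ?_ hxu
    calc l * |x u| ≤ |l * x u| := by
          rw [abs_mul]; exact mul_le_mul_of_nonneg_right (le_abs_self l) hxu.le
      _ = |(G.degree u : ℝ) * x u + ∑ v ∈ G.neighborFinset u, x v| := by rw [hrow]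
      _ ≤ (G.degree u : ℝ) * |x u| + ∑ v ∈ G.neighborFinset u, |x v| := by
          refine (abs_add_le _ _).trans (add_le_add ?_ (Finset.abs_sum_le_sum_abs _ _))
          rw [abs_mul, abs_of_pos (hd u)]
      _ ≤ (G.degree u : ℝ) * |x u| +
          ∑ v ∈ G.neighborFinset u, (G.degree v : ℝ) * (|x u| / (G.degree u : ℝ)) := by
          gcongr with v hv
          have := hu v (Finset.mem_univ v)
          rw [div_le_iff₀ (hd v)] at this
          linarith
      _ = _ := by
          rw [← Finset.sum_mul]
          ring
  · obtain ⟨u⟩ := ‹Nonempty V›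
    refine le_trans ?_ (Finset.le_sup' _ (Finset.mem_univ u))
    positivity
end
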